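/- arXiv:1605.06010 — 2 statements merged into one kernel-verified Lean document; each statement's English description precedes it below -/
import Mathlib

section
/- Let (X, T) be a dynamical system and let C be a nonempty closed subset of 𝔽₀(X) with T_F(C) ⊆ C. If the restricted system (C, T_F|_C) is topologically transitive, then all elements of C have the same maximum value: for any A, B ∈ C, max{A(x) : x ∈ X} = max{B(x) : x ∈ X}; equivalently, there exists λ ∈ [0,1] with C ⊆ 𝔽^{=λ}(X). -/
open Metric Set TopologicalSpace Filter Function
open scoped Classical

variable {X Y : Type*}

/-- Extended Hausdorff metric on subsets of `X`: the usual Hausdorff distance between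
two nonempty sets (or two empty sets), and `diam X` when exactly one of them is empty. -/
noncomputable def eHd (X : Type*) [MetricSpace X] (A B : Set X) : ℝ :=
  if (A.Nonempty ∧ B.Nonempty) ∨ (A = ∅ ∧ B = ∅) then Metric.hausdorffDist A B
  else Metric.diam (Set.univ : Set X)

/-- The `α`-cut of a fuzzy set. -/
def cut (A : X → ℝ) (α : ℝ) : Set X := {x | α ≤ A x}

/-- The levelwise metric `d_∞` on fuzzy sets. -/
noncomputable def dinf [MetricSpace X] (A B : X → ℝ) : ℝ :=
  sSup {r : ℝ | ∃ α ∈ Set.Ioc (0:ℝ) 1, r = eHd X (cut A α) (cut B α)}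

/-- A fuzzy set: an upper semicontinuous function into `[0,1]`. -/
def IsFuzzy [TopologicalSpace X] (A : X → ℝ) : Prop :=
  (∀ x, A x ∈ Set.Icc (0:ℝ) 1) ∧ UpperSemicontinuous A

/-- `𝔽₀(X)`: nonempty (not identically zero) u.s.c. fuzzy sets. -/
def F0 (X : Type*) [TopologicalSpace X] : Set (X → ℝ) :=
  {A | IsFuzzy A ∧ ∃ x, A x ≠ 0}

/-- `𝔽^{=λ}(X)`: u.s.c. fuzzy sets with maximum value `λ`. -/
def Feq (X : Type*) [TopologicalSpace X] (lam : ℝ) : Set (X → ℝ) :=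
  {A | IsFuzzy A ∧ (∃ x, A x = lam) ∧ ∀ x, A x ≤ lam}

/-- `𝔽^{≥λ}(X)`: u.s.c. fuzzy sets attaining a value `≥ λ`. -/
def Fge (X : Type*) [TopologicalSpace X] (lam : ℝ) : Set (X → ℝ) :=
  {A | IsFuzzy A ∧ ∃ x, lam ≤ A x}

/-- Zadeh's extension of `T`. -/
noncomputable def zadeh (T : X → X) (A : X → ℝ) : X → ℝ :=
  fun x => sSup (A '' (T ⁻¹' {x}))

/-- The induced map `T_K` on the hyperspace of nonempty closed (= compact) subsets. -/
def hyper [TopologicalSpace X] (T : X → X) (hT : Continuous T)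
    (A : NonemptyCompacts X) : NonemptyCompacts X :=
  ⟨⟨T '' A, A.isCompact.image hT⟩, A.nonempty.image T⟩

/-- Topological transitivity. -/
def TopTrans [TopologicalSpace Y] (S : Y → Y) : Prop :=
  ∀ U V : Set Y, IsOpen U → IsOpen V → U.Nonempty → V.Nonempty →
    ∃ n : ℕ, (S^[n] '' U ∩ V).Nonempty

/-- Weak mixing: `S × S` is transitive. -/
def TopWeakMix [TopologicalSpace Y] (S : Y → Y) : Prop :=
  TopTrans (fun p : Y × Y => (S p.1, S p.2))

/-- Topological transitivity of `S` restricted to `C`, for the topology induced by the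
(pseudo)metric `ρ`, phrased via metric balls. -/
def TransOn (ρ : Y → Y → ℝ) (S : Y → Y) (C : Set Y) : Prop :=
  ∀ A ∈ C, ∀ B ∈ C, ∀ ε > 0, ∃ n : ℕ, ∃ E ∈ C, ρ E A < ε ∧ ρ (S^[n] E) B < ε

/-- Weak mixing of `S` restricted to `C`, phrased via metric balls. -/
def WeakMixOn (ρ : Y → Y → ℝ) (S : Y → Y) (C : Set Y) : Prop :=
  ∀ A₁ ∈ C, ∀ A₂ ∈ C, ∀ B₁ ∈ C, ∀ B₂ ∈ C, ∀ ε > 0, ∃ n : ℕ,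
    ∃ E₁ ∈ C, ∃ E₂ ∈ C, ρ E₁ A₁ < ε ∧ ρ E₂ A₂ < ε ∧
      ρ (S^[n] E₁) B₁ < ε ∧ ρ (S^[n] E₂) B₂ < ε

/-!
If the suprema of `A` and `B` differ, some level `α` lies strictly above one of them and is attained
by the other, so exactly one of the two `α`-cuts is empty and `d_∞(A, B) ≥ diam X`. Hence the
supremum is constant on `d_∞`-balls of radius `diam X > 0`. Zadeh's extension preserves the
supremum, so a transitive orbit passing near `A` and then near `B` forces their suprema to agree.
-/

section LevelwiseMetric

variable [MetricSpace X] {A B : X → ℝ}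

lemma eHd_comm (s t : Set X) : eHd X s t = eHd X t s := by
  simp only [eHd, hausdorffDist_comm, and_comm]

lemma eHd_empty_left {t : Set X} (ht : t.Nonempty) : eHd X ∅ t = diam (univ : Set X) := by
  simp [eHd, ht.ne_empty]

lemma dinf_comm (A B : X → ℝ) : dinf A B = dinf B A := by
  simp only [dinf, eHd_comm (cut A _)]

lemma eHd_le_diam_univ [BoundedSpace X] (s t : Set X) : eHd X s t ≤ diam (univ : Set X) := by
  unfold eHd
  split_ifs with h
  · rcases h with ⟨hs, ht⟩ | ⟨rfl, rfl⟩
    · exact (hausdorffDist_le_diam hs (.all s) ht (.all t)).trans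
        (diam_mono (subset_univ _) (.all _))
    · simpa only [hausdorffDist_empty] using diam_nonneg
  · exact le_rfl

lemma eHd_cut_le_dinf [BoundedSpace X] (A B : X → ℝ) {α : ℝ} (hα : α ∈ Ioc (0 : ℝ) 1) :
    eHd X (cut A α) (cut B α) ≤ dinf A B := by
  refine le_csSup ⟨diam (univ : Set X), ?_⟩ ⟨α, hα, rfl⟩
  rintro _ ⟨β, -, rfl⟩
  exact eHd_le_diam_univ _ _

lemma sSup_range_le_of_dinf_lt_diam_univ [BoundedSpace X] (hA_nonneg : ∀ x, 0 ≤ A x)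
    (hA_bdd : BddAbove (range A)) (hB : ∀ x, B x ≤ 1) (hAB : dinf A B < diam (univ : Set X)) :
    sSup (range B) ≤ sSup (range A) := by
  have hsup_nonneg : 0 ≤ sSup (range A) := Real.sSup_nonneg (forall_mem_range.2 hA_nonneg)
  refine Real.sSup_le (forall_mem_range.2 fun b => ?_) hsup_nonneg
  by_contra! hb
  have hcut_A : cut A (B b) = ∅ :=
    eq_empty_of_forall_notMem fun x hx => (hx.trans (le_csSup hA_bdd ⟨x, rfl⟩)).not_gt hb
  have hcut_B : (cut B (B b)).Nonempty := ⟨b, le_refl (B b)⟩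
  refine hAB.not_ge ?_
  calc diam (univ : Set X) = eHd X (cut A (B b)) (cut B (B b)) := by
        rw [hcut_A, eHd_empty_left hcut_B]
    _ ≤ dinf A B := eHd_cut_le_dinf A B ⟨hsup_nonneg.trans_lt hb, hB b⟩

lemma sSup_range_eq_of_dinf_lt_diam_univ [BoundedSpace X] (hA : ∀ x, A x ∈ Icc (0 : ℝ) 1)
    (hB : ∀ x, B x ∈ Icc (0 : ℝ) 1) (hAB : dinf A B < diam (univ : Set X)) :
    sSup (range A) = sSup (range B) := by
  have bddAbove_range {D : X → ℝ} (hD : ∀ x, D x ∈ Icc (0 : ℝ) 1) : BddAbove (range D) :=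
    ⟨1, forall_mem_range.2 fun x => (hD x).2⟩
  exact le_antisymm
    (sSup_range_le_of_dinf_lt_diam_univ (fun x => (hB x).1) (bddAbove_range hB)
      (fun x => (hA x).2) (dinf_comm A B ▸ hAB))
    (sSup_range_le_of_dinf_lt_diam_univ (fun x => (hA x).1) (bddAbove_range hA)
      (fun x => (hB x).2) hAB)

end LevelwiseMetric

section ZadehExtension

variable {A : X → ℝ} {c : ℝ}

lemma le_zadeh_apply (T : X → X) (hA : BddAbove (range A)) (x : X) : A x ≤ zadeh T A (T x) :=
  le_csSup (hA.mono (image_subset_range _ _)) ⟨x, rfl, rfl⟩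

-- Off the range of `T` the value is `sSup ∅ = 0`, which is also the supremum of `∅` in `[0, 1]`.
lemma zadeh_apply_le (T : X → X) (hc : 0 ≤ c) (hA : ∀ x, A x ≤ c) (x : X) : zadeh T A x ≤ c :=
  Real.sSup_le (forall_mem_image.2 fun y _ => hA y) hc

lemma zadeh_apply_mem_Icc (T : X → X) (hA : ∀ x, A x ∈ Icc 0 c) (x : X) :
    zadeh T A x ∈ Icc 0 c :=
  ⟨Real.sSup_nonneg (forall_mem_image.2 fun y _ => (hA y).1),
    zadeh_apply_le T ((hA x).1.trans (hA x).2) (fun y => (hA y).2) x⟩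

lemma iterate_zadeh_apply_mem_Icc (T : X → X) (hA : ∀ x, A x ∈ Icc 0 c) (n : ℕ) :
    ∀ x, (zadeh T)^[n] A x ∈ Icc 0 c := by
  induction n with
  | zero => exact hA
  | succ n ih => simpa only [iterate_succ_apply'] using zadeh_apply_mem_Icc T ih

lemma sSup_range_zadeh (T : X → X) (hA : ∀ x, A x ∈ Icc 0 c) :
    sSup (range (zadeh T A)) = sSup (range A) := by
  have hA_bdd : BddAbove (range A) := ⟨c, forall_mem_range.2 fun x => (hA x).2⟩
  have hsup_nonneg : 0 ≤ sSup (range A) := Real.sSup_nonneg (forall_mem_range.2 fun x => (hA x).1)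
  have hTA := zadeh_apply_mem_Icc T hA
  have hTA_bdd : BddAbove (range (zadeh T A)) := ⟨c, forall_mem_range.2 fun x => (hTA x).2⟩
  apply le_antisymm
  · exact Real.sSup_le (forall_mem_range.2 <|
      zadeh_apply_le T hsup_nonneg fun x => le_csSup hA_bdd ⟨x, rfl⟩) hsup_nonneg
  · exact Real.sSup_le (forall_mem_range.2 fun x =>
      (le_zadeh_apply T hA_bdd x).trans (le_csSup hTA_bdd ⟨T x, rfl⟩))
      (Real.sSup_nonneg (forall_mem_range.2 fun x => (hTA x).1))

lemma sSup_range_iterate_zadeh (T : X → X) (hA : ∀ x, A x ∈ Icc 0 c) (n : ℕ) :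
    sSup (range ((zadeh T)^[n] A)) = sSup (range A) := by
  induction n with
  | zero => rfl
  | succ n ih =>
    rw [iterate_succ_apply', sSup_range_zadeh T (iterate_zadeh_apply_mem_Icc T hA n), ih]

end ZadehExtension

lemma IsFuzzy.mem_Feq_sSup_range [TopologicalSpace X] [CompactSpace X] [Nonempty X] {A : X → ℝ}
    (hA : IsFuzzy A) : A ∈ Feq X (sSup (range A)) := by
  obtain ⟨a, -, ha⟩ :=
    (hA.2.upperSemicontinuousOn univ).exists_isMaxOn univ_nonempty isCompact_univ
  have hmax : IsGreatest (range A) (A a) := ⟨⟨a, rfl⟩, forall_mem_range.2 fun x => ha (mem_univ x)⟩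
  rw [hmax.csSup_eq]
  exact ⟨hA, ⟨a, rfl⟩, fun x => hmax.2 ⟨x, rfl⟩⟩

lemma TransOn.sSup_range_eq [MetricSpace X] [BoundedSpace X] [Nontrivial X] {T : X → X}
    {C : Set (X → ℝ)} (htrans : TransOn dinf (zadeh T) C)
    (hC : ∀ A ∈ C, ∀ x, A x ∈ Icc (0 : ℝ) 1) {A B : X → ℝ} (hA : A ∈ C) (hB : B ∈ C) :
    sSup (range A) = sSup (range B) := by
  have hdiam : 0 < diam (univ : Set X) := diam_pos nontrivial_univ (.all _)
  obtain ⟨n, E, hE, hEA, hEB⟩ := htrans A hA B hB _ hdiam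
  calc sSup (range A) = sSup (range E) :=
        (sSup_range_eq_of_dinf_lt_diam_univ (hC E hE) (hC A hA) hEA).symm
    _ = sSup (range ((zadeh T)^[n] E)) := (sSup_range_iterate_zadeh T (hC E hE) n).symm
    _ = sSup (range B) :=
        sSup_range_eq_of_dinf_lt_diam_univ (iterate_zadeh_apply_mem_Icc T (hC E hE) n) (hC B hB) hEB

theorem transitive_subsystem_constant_max_general [MetricSpace X] [CompactSpace X] [Nontrivial X]
    {T : X → X} {C : Set (X → ℝ)} (hC : ∀ A ∈ C, IsFuzzy A) (hCne : C.Nonempty)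
    (htrans : TransOn dinf (zadeh T) C) :
    (∀ A ∈ C, ∀ B ∈ C, sSup (range A) = sSup (range B)) ∧
      ∃ lam ∈ Icc (0 : ℝ) 1, C ⊆ Feq X lam := by
  have hsup_eq : ∀ A ∈ C, ∀ B ∈ C, sSup (range A) = sSup (range B) :=
    fun A hA B hB => htrans.sSup_range_eq (fun D hD => (hC D hD).1) hA hB
  obtain ⟨A, hA⟩ := hCne
  obtain ⟨-, ⟨a, ha⟩, -⟩ := (hC A hA).mem_Feq_sSup_range
  refine ⟨hsup_eq, sSup (range A), ha ▸ (hC A hA).1 a, fun B hB => ?_⟩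
  rw [hsup_eq A hA B hB]
  exact (hC B hB).mem_Feq_sSup_range

/-- If `C` is a nonempty closed `T_F`-invariant subset of `𝔽₀(X)` on which Zadeh's
extension is topologically transitive, then all elements of `C` have the same maximum
value; equivalently `C ⊆ 𝔽^{=λ}(X)` for some `λ ∈ [0,1]`. -/
theorem transitive_subsystem_constant_max {X : Type*} [MetricSpace X] [CompactSpace X] [Nontrivial X]
    (T : X → X) (hT : Continuous T) (hTs : Function.Surjective T)
    (C : Set (X → ℝ)) (hC : C ⊆ F0 X) (hCne : C.Nonempty)
    (hCclosed : ∀ A ∈ F0 X, (∀ ε > 0, ∃ B ∈ C, dinf A B < ε) → A ∈ C)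
    (hCinv : ∀ A ∈ C, zadeh T A ∈ C)
    (htrans : TransOn dinf (zadeh T) C) :
    (∀ A ∈ C, ∀ B ∈ C, sSup (Set.range A) = sSup (Set.range B)) ∧
      ∃ lam ∈ Set.Icc (0:ℝ) 1, C ⊆ Feq X lam :=
  transitive_subsystem_constant_max_general (fun _ hA => (hC hA).1) hCne htrans
end

section
/- Let (X, T) be a dynamical system and λ ∈ (0,1]. If the induced hyperspace system (K(X), T_K) is weakly mixing, then the Zadeh extension system (𝔽^{=λ}(X), T_F|_{𝔽^{=λ}(X)}) with the levelwise metric d_∞ is weakly mixing. -/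
open Metric Set TopologicalSpace Filter Function
open scoped Classical

variable {X Y : Type*}

/-! A weakly mixing `T` hits any finite list of pairs of open sets at a common time, because by
Furstenberg's intersection lemma the hitting-time sets `N(U, V)` form a filter base. Fix a finite
net `c` of `X` and a time `n` at which some point `p (i, j)` near `c i` travels to a point near
`c j`, for all `i, j` simultaneously. Given `A` and `B` of height `λ`, let `u i` and `v j` be the
maxima of `A` and `B` near `c i` and `c j`, and put weight `min (u i) (v j)` on `p (i, j)`. Since `v`
attains `λ`, every level of the resulting finite fuzzy set looks like `A`; since `u` attains
`λ`, every level of its `n`-th image looks like `B`. The time `n` depends only on the net, hence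
serves two pairs `(A, B)` at once. Weak mixing of `T` itself is read off from compact sets contained
in given open sets. -/

section HittingTimes

/-- The set `N(U, V)` of times at which some point of `U` is carried into `V` by `S`. -/
def hittingTimes (S : Y → Y) (U V : Set Y) : Set ℕ := {n | ∃ x ∈ U, S^[n] x ∈ V}

theorem hittingTimes_mono (S : Y → Y) {U U' V V' : Set Y} (hU : U ⊆ U') (hV : V ⊆ V') :
    hittingTimes S U V ⊆ hittingTimes S U' V' := fun _ ⟨x, hx, hxV⟩ ↦ ⟨x, hU hx, hV hxV⟩

theorem hittingTimes_preimage_iterate_subset (S : Y → Y) (m : ℕ) (U V : Set Y) :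
    hittingTimes S (S^[m] ⁻¹' U) (S^[m] ⁻¹' V) ⊆ hittingTimes S U V := by
  rintro n ⟨x, hxU, hxV⟩
  exact ⟨S^[m] x, hxU, by rwa [(Commute.iterate_iterate_self S n m).eq x]⟩

variable [TopologicalSpace Y] {S : Y → Y}

theorem topWeakMix_iff : TopWeakMix S ↔ ∀ U₁ U₂ V₁ V₂ : Set Y,
    IsOpen U₁ → IsOpen U₂ → IsOpen V₁ → IsOpen V₂ →
    U₁.Nonempty → U₂.Nonempty → V₁.Nonempty → V₂.Nonempty →
    (hittingTimes S U₁ V₁ ∩ hittingTimes S U₂ V₂).Nonempty := by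
  have iterate_prod (n : ℕ) (x : Y × Y) :
      (fun p : Y × Y ↦ (S p.1, S p.2))^[n] x = (S^[n] x.1, S^[n] x.2) :=
    congrFun (Prod.map_iterate S S n) x
  constructor
  · intro hS U₁ U₂ V₁ V₂ hU₁ hU₂ hV₁ hV₂ nU₁ nU₂ nV₁ nV₂
    obtain ⟨n, _, ⟨x, hxU, rfl⟩, hxV⟩ := hS (U₁ ×ˢ U₂) (V₁ ×ˢ V₂) (hU₁.prod hU₂)
      (hV₁.prod hV₂) (nU₁.prod nU₂) (nV₁.prod nV₂)
    rw [iterate_prod] at hxV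
    exact ⟨n, ⟨x.1, hxU.1, hxV.1⟩, ⟨x.2, hxU.2, hxV.2⟩⟩
  · rintro hS U V hU hV ⟨⟨u₁, u₂⟩, hu⟩ ⟨⟨v₁, v₂⟩, hv⟩
    obtain ⟨U₁, U₂, hU₁, hU₂, hu₁, hu₂, hUU⟩ := isOpen_prod_iff.1 hU u₁ u₂ hu
    obtain ⟨V₁, V₂, hV₁, hV₂, hv₁, hv₂, hVV⟩ := isOpen_prod_iff.1 hV v₁ v₂ hv
    obtain ⟨n, ⟨x, hxU, hxV⟩, ⟨y, hyU, hyV⟩⟩ := hS U₁ U₂ V₁ V₂ hU₁ hU₂ hV₁ hV₂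
      ⟨u₁, hu₁⟩ ⟨u₂, hu₂⟩ ⟨v₁, hv₁⟩ ⟨v₂, hv₂⟩
    refine ⟨n, _, ⟨(x, y), hUU ⟨hxU, hyU⟩, rfl⟩, ?_⟩
    rw [iterate_prod]
    exact hVV ⟨hxV, hyV⟩

/-- Pairs of nonempty open sets, the index type of the sets `N(U, V)`. -/
abbrev OpenPair (Y : Type*) [TopologicalSpace Y] : Type _ :=
  {P : Set Y × Set Y // (IsOpen P.1 ∧ P.1.Nonempty) ∧ IsOpen P.2 ∧ P.2.Nonempty}

-- If `m ∈ N(U₁, U₂) ∩ N(V₁, V₂)`, then `N(U₁ ∩ S⁻ᵐ U₂, V₁ ∩ S⁻ᵐ V₂) ⊆ N(U₁, V₁) ∩ N(U₂, V₂)`.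
theorem TopWeakMix.directed_hittingTimes (hS : TopWeakMix S) (hc : Continuous S) :
    Directed (· ⊇ ·) fun P : OpenPair Y ↦ hittingTimes S P.1.1 P.1.2 := by
  rintro ⟨⟨U₁, V₁⟩, ⟨hU₁, nU₁⟩, hV₁, nV₁⟩ ⟨⟨U₂, V₂⟩, ⟨hU₂, nU₂⟩, hV₂, nV₂⟩
  obtain ⟨m, nU, nV⟩ := topWeakMix_iff.1 hS U₁ V₁ U₂ V₂ hU₁ hV₁ hU₂ hV₂ nU₁ nV₁ nU₂ nV₂
  have hcm := hc.iterate m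
  refine ⟨⟨(U₁ ∩ S^[m] ⁻¹' U₂, V₁ ∩ S^[m] ⁻¹' V₂), ⟨hU₁.inter (hU₂.preimage hcm), nU⟩,
    hV₁.inter (hV₂.preimage hcm), nV⟩, ?_, ?_⟩
  · exact hittingTimes_mono S inter_subset_left inter_subset_left
  · exact (hittingTimes_mono S inter_subset_right inter_subset_right).trans
      (hittingTimes_preimage_iterate_subset S m U₂ V₂)

theorem TopWeakMix.exists_forall_mem_hittingTimes (hS : TopWeakMix S) (hc : Continuous S)
    {J : Type*} [Finite J] (P : J → OpenPair Y) :
    ∃ n, ∀ j, n ∈ hittingTimes S (P j).1.1 (P j).1.2 := by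
  cases isEmpty_or_nonempty J
  · exact ⟨0, isEmptyElim⟩
  have : Nonempty (OpenPair Y) := .map P inferInstance
  obtain ⟨⟨⟨U, V⟩, ⟨hU, nU⟩, hV, nV⟩, hUV⟩ := (hS.directed_hittingTimes hc).finite_le P
  obtain ⟨n, hn, -⟩ := topWeakMix_iff.1 hS U U V V hU hU hV hV nU nU nV nV
  exact ⟨n, fun j ↦ hUV j hn⟩

end HittingTimes

section Hyperspace

variable [TopologicalSpace X] {T : X → X} (hT : Continuous T)

theorem coe_iterate_hyper (n : ℕ) (K : NonemptyCompacts X) :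
    (((hyper T hT)^[n] K : NonemptyCompacts X) : Set X) = T^[n] '' K := by
  induction n with
  | zero => simp
  | succ n ih =>
    rw [iterate_succ_apply', iterate_succ', image_comp, ← ih]
    rfl

theorem hittingTimes_hyper_subset (U V : Set X) :
    hittingTimes (hyper T hT) {K | (K : Set X) ⊆ U} {K | (K : Set X) ⊆ V} ⊆
      hittingTimes T U V := by
  rintro n ⟨K, hKU, hKV⟩
  obtain ⟨x, hx⟩ := K.nonempty
  rw [mem_ofPred_eq, coe_iterate_hyper, image_subset_iff] at hKV
  exact ⟨x, hKU hx, hKV hx⟩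

theorem topWeakMix_of_hyper (hwm : TopWeakMix (hyper T hT)) : TopWeakMix T := by
  have nonempty_subsets {U : Set X} :
      U.Nonempty → {K : NonemptyCompacts X | (K : Set X) ⊆ U}.Nonempty :=
    fun ⟨x, hx⟩ ↦ ⟨{x}, by simpa using hx⟩
  rw [topWeakMix_iff] at hwm ⊢
  intro U₁ U₂ V₁ V₂ hU₁ hU₂ hV₁ hV₂ nU₁ nU₂ nV₁ nV₂
  have isOpen_subsets {U : Set X} := NonemptyCompacts.isOpen_subsets_of_isOpen (U := U)
  exact (hwm _ _ _ _ (isOpen_subsets hU₁) (isOpen_subsets hU₂) (isOpen_subsets hV₁)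
    (isOpen_subsets hV₂) (nonempty_subsets nU₁) (nonempty_subsets nU₂) (nonempty_subsets nV₁)
    (nonempty_subsets nV₂)).mono
      (inter_subset_inter (hittingTimes_hyper_subset hT U₁ V₁) (hittingTimes_hyper_subset hT U₂ V₂))

end Hyperspace

section FuzzySets

theorem IsFuzzy.isClosed_cut [TopologicalSpace X] {A : X → ℝ} (hA : IsFuzzy A) (α : ℝ) :
    IsClosed (cut A α) :=
  upperSemicontinuous_iff_isClosed_preimage.1 hA.2 α

theorem isFuzzy_of_isClosed_cut [TopologicalSpace X] {A : X → ℝ} (hA : ∀ x, A x ∈ Icc (0 : ℝ) 1)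
    (hcut : ∀ α, 0 < α → IsClosed (cut A α)) : IsFuzzy A := by
  refine ⟨hA, upperSemicontinuous_iff_isClosed_preimage.2 fun α ↦ ?_⟩
  obtain hα | hα := lt_or_ge 0 α
  · exact hcut α hα
  · rw [eq_univ_of_forall fun x ↦ show x ∈ A ⁻¹' Ici α from hα.trans (hA x).1]
    exact isClosed_univ

theorem eq_of_cut_eq {A B : X → ℝ} (hA : ∀ x, 0 ≤ A x) (hB : ∀ x, 0 ≤ B x)
    (hcut : ∀ α, 0 < α → cut A α = cut B α) : A = B := by
  have le_of_cut_eq {A B : X → ℝ} (hB : ∀ x, 0 ≤ B x)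
      (hcut : ∀ α, 0 < α → cut A α = cut B α) (x : X) : A x ≤ B x := by
    obtain hx | hx := le_or_gt (A x) 0
    · exact hx.trans (hB x)
    · exact (hcut (A x) hx).subset (le_refl (A x))
  exact funext fun x ↦ le_antisymm (le_of_cut_eq hB hcut x)
    (le_of_cut_eq hA (fun α hα ↦ (hcut α hα).symm) x)

theorem min_prod_mem_Feq [TopologicalSpace X] [TopologicalSpace Y] {lam : ℝ} {A : X → ℝ}
    {B : Y → ℝ} (hA : A ∈ Feq X lam) (hB : B ∈ Feq Y lam) :
    (fun p : X × Y ↦ min (A p.1) (B p.2)) ∈ Feq (X × Y) lam := by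
  obtain ⟨⟨hA01, hAusc⟩, ⟨x, hx⟩, hAlam⟩ := hA
  obtain ⟨⟨hB01, hBusc⟩, ⟨y, hy⟩, -⟩ := hB
  refine ⟨⟨fun p ↦ ⟨le_min (hA01 p.1).1 (hB01 p.2).1, min_le_of_left_le (hA01 p.1).2⟩, ?_⟩,
    ⟨(x, y), by simp only [hx, hy, min_self]⟩, fun p ↦ min_le_of_left_le (hAlam p.1)⟩
  exact (hAusc.comp continuous_fst).inf (hBusc.comp continuous_snd)

theorem dinf_le [MetricSpace X] {A B : X → ℝ} {r : ℝ} (hr : 0 ≤ r)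
    (hAB : ∀ x, 0 < A x → ∃ y, A x ≤ B y ∧ dist x y ≤ r)
    (hBA : ∀ x, 0 < B x → ∃ y, B x ≤ A y ∧ dist x y ≤ r) : dinf A B ≤ r := by
  refine Real.sSup_le ?_ hr
  rintro _ ⟨α, ⟨hα, -⟩, rfl⟩
  have cut_near {A B : X → ℝ} (hAB : ∀ x, 0 < A x → ∃ y, A x ≤ B y ∧ dist x y ≤ r) :
      ∀ x ∈ cut A α, ∃ y ∈ cut B α, dist x y ≤ r := fun x hx ↦
    let ⟨y, hxy, hd⟩ := hAB x (hα.trans_le hx)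
    ⟨y, le_trans hx hxy, hd⟩
  have hne : (cut A α).Nonempty ↔ (cut B α).Nonempty :=
    ⟨fun ⟨x, hx⟩ ↦ let ⟨y, hy, _⟩ := cut_near hAB x hx; ⟨y, hy⟩,
      fun ⟨x, hx⟩ ↦ let ⟨y, hy, _⟩ := cut_near hBA x hx; ⟨y, hy⟩⟩
  have hcase : ((cut A α).Nonempty ∧ (cut B α).Nonempty) ∨ (cut A α = ∅ ∧ cut B α = ∅) := by
    simp only [← not_nonempty_iff_eq_empty, hne]
    tauto
  rw [eHd, if_pos hcase]
  exact hausdorffDist_le_of_mem_dist hr (cut_near hAB) (cut_near hBA)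

end FuzzySets

section FuzzyImage

variable {Z : Type*}

/-- The image of a fuzzy set under a map between possibly different spaces, extending `zadeh`. It
is `0` outside the range of `f`, where the supremum is taken over the empty set. -/
noncomputable def fuzzyImage (f : X → Y) (A : X → ℝ) : Y → ℝ :=
  fun y ↦ sSup (A '' (f ⁻¹' {y}))

theorem zadeh_eq_fuzzyImage (T : X → X) : zadeh T = fuzzyImage T := rfl

variable [TopologicalSpace X] {A : X → ℝ}

theorem IsFuzzy.fuzzyImage_mem_Icc (hA : IsFuzzy A) (f : X → Y) (y : Y) :
    fuzzyImage f A y ∈ Icc (0 : ℝ) 1 := by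
  constructor
  · exact Real.sSup_nonneg (forall_mem_image.2 fun x _ ↦ (hA.1 x).1)
  · exact Real.sSup_le (forall_mem_image.2 fun x _ ↦ (hA.1 x).2) zero_le_one

theorem IsFuzzy.le_fuzzyImage (hA : IsFuzzy A) (f : X → Y) (x : X) :
    A x ≤ fuzzyImage f A (f x) :=
  le_csSup ⟨1, forall_mem_image.2 fun z _ ↦ (hA.1 z).2⟩ ⟨x, rfl, rfl⟩

variable [CompactSpace X] [TopologicalSpace Y] {f : X → Y}

theorem IsFuzzy.exists_eq_fuzzyImage [T1Space Y] (hA : IsFuzzy A) (hf : Continuous f) {y : Y}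
    (hy : 0 < fuzzyImage f A y) : ∃ x, f x = y ∧ A x = fuzzyImage f A y := by
  have hne : (f ⁻¹' {y}).Nonempty := by
    by_contra hempty
    rw [fuzzyImage, not_nonempty_iff_eq_empty.1 hempty, image_empty, Real.sSup_empty] at hy
    exact hy.false
  obtain ⟨x, hx, hmax⟩ := UpperSemicontinuousOn.exists_isMaxOn hne
    (isClosed_singleton.preimage hf).isCompact (hA.2.upperSemicontinuousOn _)
  have hgreatest : IsGreatest (A '' (f ⁻¹' {y})) (A x) :=
    ⟨mem_image_of_mem A hx, forall_mem_image.2 fun _ hz ↦ hmax hz⟩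
  exact ⟨x, hx, hgreatest.csSup_eq.symm⟩

theorem IsFuzzy.cut_fuzzyImage [T1Space Y] (hA : IsFuzzy A) (hf : Continuous f) {α : ℝ}
    (hα : 0 < α) : cut (fuzzyImage f A) α = f '' cut A α := by
  apply Subset.antisymm
  · intro y hy
    obtain ⟨x, hxy, hx⟩ := hA.exists_eq_fuzzyImage hf (hα.trans_le hy)
    exact ⟨x, hy.trans hx.ge, hxy⟩
  · rintro _ ⟨x, hx, rfl⟩
    exact le_trans hx (hA.le_fuzzyImage f x)

variable [T2Space Y]

theorem isFuzzy_fuzzyImage (hA : IsFuzzy A) (hf : Continuous f) : IsFuzzy (fuzzyImage f A) := by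
  refine isFuzzy_of_isClosed_cut (hA.fuzzyImage_mem_Icc f) fun α hα ↦ ?_
  rw [hA.cut_fuzzyImage hf hα]
  exact ((hA.isClosed_cut α).isCompact.image hf).isClosed

theorem fuzzyImage_mem_Feq {lam : ℝ} (hA : A ∈ Feq X lam) (hf : Continuous f) :
    fuzzyImage f A ∈ Feq Y lam := by
  obtain ⟨hfuzzy, ⟨x, hx⟩, hlam⟩ := hA
  have hle (y : Y) : fuzzyImage f A y ≤ lam :=
    Real.sSup_le (forall_mem_image.2 fun z _ ↦ hlam z) (hx ▸ (hfuzzy.1 x).1)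
  exact ⟨isFuzzy_fuzzyImage hfuzzy hf, ⟨f x, (hle _).antisymm (hx ▸ hfuzzy.le_fuzzyImage f x)⟩, hle⟩

theorem IsFuzzy.fuzzyImage_fuzzyImage [CompactSpace Y] [TopologicalSpace Z] [T1Space Z]
    (hA : IsFuzzy A) (hf : Continuous f) {g : Y → Z} (hg : Continuous g) :
    fuzzyImage g (fuzzyImage f A) = fuzzyImage (g ∘ f) A := by
  have hfA := isFuzzy_fuzzyImage hA hf
  refine eq_of_cut_eq (fun z ↦ (hfA.fuzzyImage_mem_Icc g z).1)
    (fun z ↦ (hA.fuzzyImage_mem_Icc (g ∘ f) z).1) fun α hα ↦ ?_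
  rw [hfA.cut_fuzzyImage hg hα, hA.cut_fuzzyImage hf hα, hA.cut_fuzzyImage (hg.comp hf) hα,
    image_comp]

theorem IsFuzzy.iterate_zadeh_fuzzyImage [CompactSpace Y] (hA : IsFuzzy A) (hf : Continuous f)
    {T : Y → Y} (hT : Continuous T) (n : ℕ) :
    (zadeh T)^[n] (fuzzyImage f A) = fuzzyImage (T^[n] ∘ f) A := by
  induction n with
  | zero => rfl
  | succ n ih =>
    rw [iterate_succ_apply', ih, zadeh_eq_fuzzyImage,
      hA.fuzzyImage_fuzzyImage ((hT.iterate n).comp hf) hT, iterate_succ', comp_assoc]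

end FuzzyImage

section Sampling

variable [MetricSpace X] {ι J : Type*} {A : X → ℝ} {c : ι → X} {u : ι → ℝ} {r : ℝ}

/-- The points `c i` with weights `u i` sample the fuzzy set `A` up to distance `r` at all levels:
for each `α` the set of points of weight at least `α` and the `α`-cut of `A` lie in the
`r`-neighbourhoods of each other. -/
def IsSample (r : ℝ) (c : ι → X) (u : ι → ℝ) (A : X → ℝ) : Prop :=
  (∀ i, ∃ x, u i ≤ A x ∧ dist (c i) x ≤ r) ∧ ∀ x, ∃ i, A x ≤ u i ∧ dist x (c i) ≤ r

theorem IsSample.reindex (h : IsSample r c u A) {p : J → X} {w : J → ℝ} {π : J → ι} {s : ℝ}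
    (hp : ∀ j, dist (p j) (c (π j)) ≤ s) (hwu : ∀ j, w j ≤ u (π j))
    (huw : ∀ i, ∃ j, π j = i ∧ u i ≤ w j) : IsSample (s + r) p w A := by
  constructor
  · intro j
    obtain ⟨x, hux, hcx⟩ := h.1 (π j)
    exact ⟨x, (hwu j).trans hux, (dist_triangle _ _ _).trans (add_le_add (hp j) hcx)⟩
  · intro x
    obtain ⟨i, hxu, hxc⟩ := h.2 x
    obtain ⟨j, rfl, huwj⟩ := huw i
    refine ⟨j, hxu.trans huwj, ?_⟩
    rw [add_comm]
    exact (dist_triangle_right _ _ _).trans (add_le_add hxc (hp j))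

theorem IsSample.dinf_fuzzyImage_le [TopologicalSpace ι] [CompactSpace ι] [Nonempty ι]
    (h : IsSample r c u A) (hu : IsFuzzy u) (hc : Continuous c) : dinf (fuzzyImage c u) A ≤ r := by
  obtain ⟨x, -, hx⟩ := h.1 (Classical.arbitrary ι)
  have hr : 0 ≤ r := dist_nonneg.trans hx
  refine dinf_le hr (fun y hy ↦ ?_) fun x _ ↦ ?_
  · obtain ⟨i, rfl, hi⟩ := hu.exists_eq_fuzzyImage hc hy
    exact hi ▸ h.1 i
  · obtain ⟨i, hxu, hxc⟩ := h.2 x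
    exact ⟨c i, hxu.trans (hu.le_fuzzyImage c i), hxc⟩

theorem exists_isSample_mem_Feq [ProperSpace X] [TopologicalSpace ι] [DiscreteTopology ι]
    (hc : ∀ x, ∃ i, dist x (c i) ≤ r) {lam : ℝ} (hA : A ∈ Feq X lam) :
    ∃ u ∈ Feq ι lam, IsSample r c u A := by
  obtain ⟨⟨hA01, hAusc⟩, ⟨x₀, hx₀⟩, hAlam⟩ := hA
  obtain ⟨i₀, hi₀⟩ := hc x₀
  have exists_max (i : ι) : ∃ y ∈ closedBall (c i) r, IsMaxOn A (closedBall (c i) r) y :=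
    UpperSemicontinuousOn.exists_isMaxOn ⟨c i, mem_closedBall_self (dist_nonneg.trans hi₀)⟩
      (isCompact_closedBall _ _) (hAusc.upperSemicontinuousOn _)
  choose y hy hmax using exists_max
  refine ⟨A ∘ y, ⟨⟨fun i ↦ hA01 (y i), continuous_of_discreteTopology.upperSemicontinuous⟩,
    ⟨i₀, (hAlam _).antisymm (hx₀ ▸ hmax i₀ hi₀)⟩, fun i ↦ hAlam (y i)⟩, ?_, ?_⟩
  · exact fun i ↦ ⟨y i, le_rfl, mem_closedBall'.1 (hy i)⟩
  · intro x
    obtain ⟨i, hi⟩ := hc x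
    exact ⟨i, hmax i hi, hi⟩

end Sampling

section WeakMixing

variable [MetricSpace X] {T : X → X}

theorem TopWeakMix.exists_connecting_points {ι : Type*} [Finite ι] (hwm : TopWeakMix T)
    (hT : Continuous T) (c : ι → X) {r : ℝ} (hr : 0 < r) :
    ∃ (n : ℕ) (p : ι × ι → X), ∀ j, dist (p j) (c j.1) ≤ r ∧ dist (T^[n] (p j)) (c j.2) ≤ r := by
  obtain ⟨n, hn⟩ := hwm.exists_forall_mem_hittingTimes hT fun j : ι × ι ↦
    ⟨(ball (c j.1) r, ball (c j.2) r), ⟨isOpen_ball, nonempty_ball.2 hr⟩,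
      isOpen_ball, nonempty_ball.2 hr⟩
  choose p hp hTp using hn
  exact ⟨n, p, fun j ↦ ⟨(hp j).le, (hTp j).le⟩⟩

variable [CompactSpace X]

theorem exists_finite_net {r : ℝ} (hr : 0 < r) :
    ∃ t : Set X, t.Finite ∧ ∀ x : X, ∃ y : t, dist x (y : X) ≤ r := by
  obtain ⟨t, -, ht, hcover⟩ := finite_cover_balls_of_compact (isCompact_univ (X := X)) hr
  refine ⟨t, ht, fun x ↦ ?_⟩
  obtain ⟨y, hy, hxy⟩ := mem_iUnion₂.1 (hcover (mem_univ x))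
  exact ⟨⟨y, hy⟩, (mem_ball.1 hxy).le⟩

theorem exists_mem_Feq_dinf_le {ι : Type*} [Finite ι] [TopologicalSpace ι] [DiscreteTopology ι]
    (hT : Continuous T) {c : ι → X} {r s : ℝ}
    (hc : ∀ x, ∃ i, dist x (c i) ≤ r) {n : ℕ} {p : ι × ι → X}
    (hp : ∀ j, dist (p j) (c j.1) ≤ s ∧ dist (T^[n] (p j)) (c j.2) ≤ s)
    {lam : ℝ} {A B : X → ℝ} (hA : A ∈ Feq X lam) (hB : B ∈ Feq X lam) :
    ∃ E ∈ Feq X lam, dinf E A ≤ s + r ∧ dinf ((zadeh T)^[n] E) B ≤ s + r := by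
  obtain ⟨u, hu, huA⟩ := exists_isSample_mem_Feq hc hA
  obtain ⟨v, hv, hvB⟩ := exists_isSample_mem_Feq hc hB
  obtain ⟨i₀, hi₀⟩ := hu.2.1
  obtain ⟨j₀, hj₀⟩ := hv.2.1
  let w : ι × ι → ℝ := fun j ↦ min (u j.1) (v j.2)
  have hw : w ∈ Feq (ι × ι) lam := min_prod_mem_Feq hu hv
  have hwA : IsSample (s + r) p w A := huA.reindex (fun j ↦ (hp j).1) (fun j ↦ min_le_left _ _)
    fun i ↦ ⟨(i, j₀), rfl, le_min le_rfl (hj₀ ▸ hu.2.2 i)⟩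
  have hwB : IsSample (s + r) (T^[n] ∘ p) w B :=
    hvB.reindex (fun j ↦ (hp j).2) (fun j ↦ min_le_right _ _)
      fun i ↦ ⟨(i₀, i), rfl, le_min (hi₀ ▸ hv.2.2 i) le_rfl⟩
  have : Nonempty (ι × ι) := ⟨(i₀, j₀)⟩
  have hp_cont : Continuous p := continuous_of_discreteTopology
  refine ⟨fuzzyImage p w, fuzzyImage_mem_Feq hw hp_cont,
    hwA.dinf_fuzzyImage_le hw.1 hp_cont, ?_⟩
  rw [hw.1.iterate_zadeh_fuzzyImage hp_cont hT]
  exact hwB.dinf_fuzzyImage_le hw.1 ((hT.iterate n).comp hp_cont)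

theorem TopWeakMix.weakMixOn_zadeh (hwm : TopWeakMix T) (hT : Continuous T) (lam : ℝ) :
    WeakMixOn dinf (zadeh T) (Feq X lam) := by
  intro A₁ hA₁ A₂ hA₂ B₁ hB₁ B₂ hB₂ ε hε
  have hε4 : 0 < ε / 4 := by positivity
  have hlt : ε / 4 + ε / 4 < ε := by linarith
  obtain ⟨t, ht, hnet⟩ := exists_finite_net (X := X) hε4
  have : Finite t := ht
  obtain ⟨n, p, hp⟩ := hwm.exists_connecting_points hT ((↑) : t → X) hε4
  obtain ⟨E₁, hE₁, hEA₁, hEB₁⟩ := exists_mem_Feq_dinf_le hT hnet hp hA₁ hB₁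
  obtain ⟨E₂, hE₂, hEA₂, hEB₂⟩ := exists_mem_Feq_dinf_le hT hnet hp hA₂ hB₂
  exact ⟨n, E₁, hE₁, E₂, hE₂, hEA₁.trans_lt hlt, hEA₂.trans_lt hlt, hEB₁.trans_lt hlt,
    hEB₂.trans_lt hlt⟩

end WeakMixing

/-- If the induced hyperspace system `(K(X), T_K)` is weakly mixing, then the Zadeh
extension restricted to `𝔽^{=λ}(X)` is weakly mixing. -/
theorem zadeh_weakMixing_of_hyper_weakMixing {X : Type*} [MetricSpace X] [CompactSpace X] [Nontrivial X]
    (T : X → X) (hT : Continuous T) (hTs : Function.Surjective T)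
    (lam : ℝ) (hlam : lam ∈ Set.Ioc (0:ℝ) 1)
    (hwm : TopWeakMix (hyper T hT)) :
    WeakMixOn dinf (zadeh T) (Feq X lam) :=
  (topWeakMix_of_hyper hT hwm).weakMixOn_zadeh hT lam
end
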